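/- Let k ∈ ℕ and let G be a subgroup of the symmetric group on [k]. For each n ∈ ℕ let E_n be a set of maps [n] → [k] such that: (i) for all g ∈ G and α ∈ E_n, the composition g∘α lies in E_n; and (ii) for every injection π : [m] → [n] and every α ∈ E_n, the composition α∘π lies in E_m. Let the group G × Sym([n]) act on E_n by (g,τ)·α = g∘α∘τ⁻¹. Then the number of (G × Sym([n]))-orbits on E_n (equivalently, the number of Sym([n])-orbits on the quotient E_n/G) is a quasipolynomial in n for all n ≫ 0. -/

import Mathlib

/-- A function `f : ℤ → ℚ` is a quasipolynomial if there are an integer `N ≥ 1` and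
polynomials `p i ∈ ℚ[t]` such that `f n = p (n mod N) (n)` for all `n`. -/
def IsQuasiPolynomial (f : ℤ → ℚ) : Prop :=
  ∃ N : ℕ, 0 < N ∧ ∃ p : ZMod N → Polynomial ℚ,
    ∀ n : ℤ, f n = (p (n : ZMod N)).eval (n : ℚ)

/-- A quantity `a : ℕ → ℕ` is a quasipolynomial in `n` for all `n ≫ 0`. -/
def QuasiPolynomialCount (a : ℕ → ℕ) : Prop :=
  ∃ f : ℤ → ℚ, IsQuasiPolynomial f ∧ ∃ n₀ : ℕ, ∀ n : ℕ, n₀ ≤ n → (a n : ℚ) = f n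

/-!
Up to the action of `Sym([n])` a word `α : [n] → κ` is its content, the vector of letter
multiplicities, and `β` is a restriction of `α` along an injection, up to reordering, exactly when
the content of `β` is at most that of `α`. Hence the contents of the words in `E` form a lower set
`D` in `κ → ℕ`, stable under `G`, and the orbits to be counted are the `G`-orbits on the elements
of `D` of total size `n`. By Burnside's lemma it suffices to count the elements fixed by one `g`.
These are functions on the set of `⟨g⟩`-orbits in `κ`, so they form the degree `n` part of a lower
set for weights, the orbit lengths, that divide `|G|`.

Let `h_D` be the weighted Hilbert function of a lower set `D`, for weights `w` dividing `N`.
Separating the exponent vectors with `c i ≠ 0` from those with `c i = 0` gives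
`h_D (n + w i) = h_{D : i} n + h_{D, c i = 0} (n + w i)`, where `D : i` is the translate of `D` by
`-eᵢ`. Lower sets satisfy the descending chain condition by Dickson's lemma, so by induction the
last term is eventually a quasipolynomial of period `N`. Either `D : i` is smaller than `D`, and the
first term is too, or `D : i = D`, and `h_D` solves a difference equation with step `w i ∣ N`.
-/

section QuasiPolynomials

open Filter Polynomial

/-- The sequences that are quasipolynomial of period `N` for all large arguments: on every residue
class modulo `N` they eventually agree with a polynomial. -/
def eventualQuasiPolynomials (N : ℕ) : Submodule ℚ (ℕ → ℚ) where
  carrier := {a | ∀ r : ℕ, ∃ P : ℚ[X], ∀ᶠ n : ℕ in atTop, n ≡ r [MOD N] → a n = P.eval (n : ℚ)}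
  zero_mem' := fun _ => ⟨0, by simp⟩
  add_mem' := by
    intro a b ha hb r
    obtain ⟨P, hP⟩ := ha r
    obtain ⟨Q, hQ⟩ := hb r
    refine ⟨P + Q, ?_⟩
    filter_upwards [hP, hQ] with n hPn hQn hn
    rw [Pi.add_apply, hPn hn, hQn hn, eval_add]
  smul_mem' := by
    intro x a ha r
    obtain ⟨P, hP⟩ := ha r
    refine ⟨C x * P, ?_⟩
    filter_upwards [hP] with n hPn hn
    rw [Pi.smul_apply, hPn hn, eval_mul, eval_C, smul_eq_mul]

variable {N : ℕ} {a b : ℕ → ℚ}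

lemma mem_eventualQuasiPolynomials_of_eventually_eq_zero (ha : ∀ᶠ n in atTop, a n = 0) :
    a ∈ eventualQuasiPolynomials N :=
  fun _ => ⟨0, ha.mono fun _ hn _ => hn.trans eval_zero.symm⟩

lemma comp_add_right_mem_eventualQuasiPolynomials (ha : a ∈ eventualQuasiPolynomials N) (s : ℕ) :
    (fun n => a (n + s)) ∈ eventualQuasiPolynomials N := by
  intro r
  obtain ⟨P, hP⟩ := ha (r + s)
  refine ⟨P.comp (X + C (s : ℚ)), ?_⟩
  filter_upwards [(tendsto_add_atTop_nat s).eventually hP] with n hPn hn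
  rw [hPn (hn.add_right s)]
  simp

lemma mem_eventualQuasiPolynomials_of_comp_add_right (hN : N ≠ 0) {s : ℕ}
    (ha : (fun n => a (n + s)) ∈ eventualQuasiPolynomials N) :
    a ∈ eventualQuasiPolynomials N := by
  intro r
  have hs : s ≤ N * s := Nat.le_mul_of_pos_left s (Nat.pos_of_ne_zero hN)
  obtain ⟨P, hP⟩ := ha (r + (N * s - s))
  refine ⟨P.comp (X - C (s : ℚ)), ?_⟩
  filter_upwards [(tendsto_sub_atTop_nat s).eventually hP, eventually_ge_atTop s] with n hPn hsn hn
  have hmod : n - s ≡ r + (N * s - s) [MOD N] := by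
    refine Nat.ModEq.add_right_cancel' s ?_
    rw [Nat.sub_add_cancel hsn, add_assoc, Nat.sub_add_cancel hs]
    exact hn.trans (Nat.modEq_iff_dvd.2 ⟨s, by push_cast; ring⟩)
  have h := hPn hmod
  rw [Nat.sub_add_cancel hsn, Nat.cast_sub hsn] at h
  simpa using h

lemma exists_eval_add_sub_eval_eq (q : ℚ[X]) {h : ℚ} (hh : h ≠ 0) :
    ∃ P : ℚ[X], ∀ x : ℚ, P.eval (x + h) - P.eval x = q.eval x := by
  induction q using Polynomial.induction_on' with
  | add p q hp hq =>
    obtain ⟨P, hP⟩ := hp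
    obtain ⟨Q, hQ⟩ := hq
    refine ⟨P + Q, fun x => ?_⟩
    rw [eval_add, eval_add, eval_add, ← hP, ← hQ]
    ring
  | monomial n c =>
    refine ⟨C (c * h ^ n / (n + 1)) * (Polynomial.bernoulli (n + 1)).comp (C h⁻¹ * X), fun x => ?_⟩
    have hB := Polynomial.bernoulli_eval_one_add (n + 1) (h⁻¹ * x)
    have hxh : h⁻¹ * (x + h) = 1 + h⁻¹ * x := by field_simp; ring
    have hn : (n : ℚ) + 1 ≠ 0 := by positivity
    simp only [eval_mul, eval_C, eval_comp, eval_X, hxh, hB, eval_monomial, Nat.add_sub_cancel,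
      mul_pow, inv_pow]
    push_cast
    field_simp
    ring

lemma mem_eventualQuasiPolynomials_of_apply_add_period (hN : N ≠ 0)
    (hb : b ∈ eventualQuasiPolynomials N) (hab : ∀ n, a (n + N) = a n + b n) :
    a ∈ eventualQuasiPolynomials N := by
  intro r
  obtain ⟨q, hq⟩ := hb r
  obtain ⟨P, hP⟩ := exists_eval_add_sub_eval_eq q (Nat.cast_ne_zero.2 hN : (N : ℚ) ≠ 0)
  obtain ⟨n₀, hn₀⟩ := eventually_atTop.1 hq
  have hconst : ∀ t, a (r + N * (n₀ + t)) - P.eval ((r + N * (n₀ + t) : ℕ) : ℚ) =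
      a (r + N * n₀) - P.eval ((r + N * n₀ : ℕ) : ℚ) := by
    intro t
    induction t with
    | zero => rfl
    | succ t ih =>
      have hle : n₀ ≤ r + N * (n₀ + t) := (Nat.le_add_right n₀ t).trans
        ((Nat.le_mul_of_pos_left _ (Nat.pos_of_ne_zero hN)).trans (Nat.le_add_left _ _))
      have hbq := hn₀ _ hle (by simp [Nat.ModEq])
      rw [← ih, ← add_assoc, mul_add_one, ← add_assoc, hab, hbq, ← hP]
      push_cast
      ring
  refine ⟨P + C (a (r + N * n₀) - P.eval ((r + N * n₀ : ℕ) : ℚ)), ?_⟩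
  filter_upwards [eventually_ge_atTop (r + N * n₀)] with n hn hnr
  obtain ⟨s, rfl⟩ : ∃ s, n = r + N * s := by
    obtain ⟨s, hs⟩ := (Nat.modEq_iff_dvd' ((Nat.le_add_right _ _).trans hn)).1 hnr.symm
    exact ⟨s, by omega⟩
  obtain ⟨t, rfl⟩ := Nat.exists_eq_add_of_le
    (Nat.le_of_mul_le_mul_left (Nat.le_of_add_le_add_left hn) (Nat.pos_of_ne_zero hN))
  rw [eval_add, eval_C, ← hconst t]
  ring

lemma mem_eventualQuasiPolynomials_of_apply_add (hN : N ≠ 0) {w : ℕ} (hw : w ∣ N)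
    (hb : b ∈ eventualQuasiPolynomials N) (hab : ∀ n, a (n + w) = a n + b n) :
    a ∈ eventualQuasiPolynomials N := by
  obtain ⟨m, rfl⟩ := hw
  have htelescope : ∀ t n, a (n + w * t) = a n + ∑ j ∈ Finset.range t, b (n + w * j) := by
    intro t n
    induction t with
    | zero => simp
    | succ t ih => rw [mul_add_one, ← add_assoc, hab, ih, Finset.sum_range_succ, add_assoc]
  refine mem_eventualQuasiPolynomials_of_apply_add_period hN
    (b := ∑ j ∈ Finset.range m, fun n => b (n + w * j)) ?_ fun n => ?_
  · exact sum_mem fun j _ => comp_add_right_mem_eventualQuasiPolynomials hb _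
  · rw [htelescope, Finset.sum_apply]

lemma quasiPolynomialCount_of_mem_eventualQuasiPolynomials (hN : N ≠ 0) {a : ℕ → ℕ}
    (ha : (fun n => (a n : ℚ)) ∈ eventualQuasiPolynomials N) : QuasiPolynomialCount a := by
  have : NeZero N := ⟨hN⟩
  choose P hP using fun z : ZMod N => ha z.val
  obtain ⟨n₀, hn₀⟩ := eventually_atTop.1 (eventually_all.2 hP)
  refine ⟨fun n => (P n).eval (n : ℚ), ⟨N, Nat.pos_of_ne_zero hN, P, fun _ => rfl⟩, n₀,
    fun n hn => ?_⟩
  have hmod : n ≡ (n : ZMod N).val [MOD N] := by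
    rw [ZMod.val_natCast]
    exact (Nat.mod_modEq n N).symm
  simpa using hn₀ n hn _ hmod

end QuasiPolynomials

section LowerSets

instance wellFoundedLT_lowerSet {α : Type*} [Preorder α] [WellQuasiOrderedLE α] :
    WellFoundedLT (LowerSet α) := by
  refine ⟨wellFounded_iff_isEmpty_descending_chain.2 ⟨fun ⟨D, hD⟩ => ?_⟩⟩
  have hanti : Antitone D := antitone_nat_of_succ_le fun n => (hD n).le
  choose c hc hc' using fun n => Set.exists_of_ssubset (hD n)
  obtain ⟨m, n, hmn, hle⟩ := wellQuasiOrdered_le c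
  exact hc' m ((D (m + 1)).lower hle (hanti hmn (hc n)))

variable {ι : Type*}

/-- The elements of weighted degree `n` in a set `D` of exponent vectors. -/
def weightLevel [Fintype ι] (w : ι → ℕ) (D : Set (ι → ℕ)) (n : ℕ) : Set (ι → ℕ) :=
  {c | c ∈ D ∧ w ⬝ᵥ c = n}

lemma finite_weightLevel [Fintype ι] {w : ι → ℕ} (hw : ∀ i, 0 < w i) (D : Set (ι → ℕ)) (n : ℕ) :
    (weightLevel w D n).Finite := by
  classical
  refine (Set.finite_Iic (fun _ : ι => n)).subset ?_
  rintro c ⟨-, hc⟩ i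
  calc c i ≤ w i * c i := Nat.le_mul_of_pos_left _ (hw i)
    _ ≤ w ⬝ᵥ c :=
      Finset.single_le_sum (f := fun i => w i * c i) (fun _ _ => Nat.zero_le _) (Finset.mem_univ i)
    _ = n := hc

/-- The part of a lower set `D` lying in the hyperplane `c i = 0`. -/
def sliceZero (D : LowerSet (ι → ℕ)) (i : ι) : LowerSet (ι → ℕ) where
  carrier := {c | c ∈ D ∧ c i = 0}
  lower' := fun _ _ hle ⟨hc, hi⟩ => ⟨D.lower hle hc, Nat.le_zero.1 ((hle i).trans_eq hi)⟩

/-- The translate of a lower set `D` by `-eᵢ`; for the monomial ideal complementary to `D` this is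
the colon ideal by the `i`-th variable. -/
def colonSingle [DecidableEq ι] (D : LowerSet (ι → ℕ)) (i : ι) : LowerSet (ι → ℕ) where
  carrier := {c | c + Pi.single i 1 ∈ D}
  lower' := fun _ _ hle hc => D.lower (add_le_add_left hle _) hc

lemma colonSingle_le [DecidableEq ι] (D : LowerSet (ι → ℕ)) (i : ι) : colonSingle D i ≤ D :=
  fun _ hc => D.lower le_self_add hc

lemma weightLevel_add_eq_union [Fintype ι] [DecidableEq ι] (w : ι → ℕ) (D : LowerSet (ι → ℕ))
    (i : ι) (n : ℕ) :
    weightLevel w D (n + w i) =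
      (· + Pi.single i 1) '' weightLevel w (colonSingle D i) n ∪
        weightLevel w (sliceZero D i) (n + w i) := by
  ext c
  constructor
  · rintro ⟨hc, hn⟩
    rcases eq_or_ne (c i) 0 with hi | hi
    · exact Or.inr ⟨⟨hc, hi⟩, hn⟩
    · have hsub : c - Pi.single i 1 + Pi.single i 1 = c :=
        tsub_add_cancel_of_le (update_le_iff.2 ⟨Nat.one_le_iff_ne_zero.2 hi, fun _ _ => zero_le⟩)
      refine Or.inl ⟨c - Pi.single i 1, ⟨?_, ?_⟩, hsub⟩
      · change c - Pi.single i 1 + Pi.single i 1 ∈ D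
        rwa [hsub]
      · rwa [← hsub, dotProduct_add, dotProduct_single_one, Nat.add_right_cancel_iff] at hn
  · rintro (⟨c, ⟨hc, hn⟩, rfl⟩ | ⟨⟨hc, -⟩, hn⟩)
    · exact ⟨hc, by rw [dotProduct_add, dotProduct_single_one, hn]⟩
    · exact ⟨hc, hn⟩

lemma ncard_weightLevel_add [Fintype ι] [DecidableEq ι] {w : ι → ℕ} (hw : ∀ i, 0 < w i)
    (D : LowerSet (ι → ℕ)) (i : ι) (n : ℕ) :
    (weightLevel w D (n + w i)).ncard =
      (weightLevel w (colonSingle D i) n).ncard +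
        (weightLevel w (sliceZero D i) (n + w i)).ncard := by
  have hdisj : Disjoint ((· + Pi.single i 1) '' weightLevel w (colonSingle D i) n)
      (weightLevel w (sliceZero D i) (n + w i)) := by
    rw [Set.disjoint_left]
    rintro _ ⟨c, -, rfl⟩ ⟨⟨-, hi⟩, -⟩
    simp at hi
  rw [weightLevel_add_eq_union, Set.ncard_union_eq hdisj ((finite_weightLevel hw _ _).image _)
    (finite_weightLevel hw _ _), Set.ncard_image_of_injective _ (add_left_injective _)]

theorem ncard_weightLevel_mem_eventualQuasiPolynomials [Fintype ι] {N : ℕ} (hN : N ≠ 0) {w : ι → ℕ}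
    (hw : ∀ i, w i ∣ N) (D : LowerSet (ι → ℕ)) :
    (fun n => ((weightLevel w D n).ncard : ℚ)) ∈ eventualQuasiPolynomials N := by
  classical
  have hpos : ∀ i, 0 < w i := fun i => Nat.pos_of_dvd_of_pos (hw i) (Nat.pos_of_ne_zero hN)
  induction D using WellFoundedLT.induction with | _ D ih
  by_cases hD : ∀ c ∈ D, c = 0
  · refine mem_eventualQuasiPolynomials_of_eventually_eq_zero ?_
    filter_upwards [Filter.eventually_gt_atTop 0] with n hn
    have hempty : weightLevel w D n = ∅ := by
      refine Set.eq_empty_of_forall_notMem fun c ⟨hc, hcn⟩ => hn.ne ?_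
      rw [← hcn, hD c hc, dotProduct_zero]
    simp [hempty]
  push Not at hD
  obtain ⟨c, hc, hc0⟩ := hD
  obtain ⟨i, hi⟩ := Function.ne_iff.1 hc0
  have hslice : sliceZero D i < D := by
    refine lt_of_le_of_ne (fun _ h => h.1) fun h => hi ?_
    rw [← h] at hc
    exact hc.2
  have hslice_mem := comp_add_right_mem_eventualQuasiPolynomials (ih _ hslice) (w i)
  have hrec := ncard_weightLevel_add hpos D i
  rcases (colonSingle_le D i).eq_or_lt with heq | hlt
  · refine mem_eventualQuasiPolynomials_of_apply_add hN (hw i) hslice_mem fun n => ?_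
    rw [hrec, heq, Nat.cast_add]
  · refine mem_eventualQuasiPolynomials_of_comp_add_right hN (s := w i) ?_
    simp only [hrec, Nat.cast_add]
    exact add_mem (ih _ hlt) hslice_mem

end LowerSets

section Content

variable {X Y κ : Type*}

/-- The content of a word `α`: the number of occurrences of each letter. -/
noncomputable def content (α : X → κ) (i : κ) : ℕ :=
  Nat.card {x // α x = i}

lemma one_dotProduct_comp [Fintype X] [Fintype κ] (α : X → κ) (d : κ → ℕ) :
    1 ⬝ᵥ (d ∘ α) = content α ⬝ᵥ d := by
  classical
  rw [one_dotProduct, ← Finset.sum_fiberwise Finset.univ α]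
  refine Finset.sum_congr rfl fun i _ => ?_
  have hconst : ∀ x ∈ Finset.univ.filter (α · = i), (d ∘ α) x = d i :=
    fun x hx => congrArg d (Finset.mem_filter.1 hx).2
  rw [Finset.sum_congr rfl hconst, Finset.sum_const, smul_eq_mul, content, Nat.card_eq_fintype_card,
    Fintype.card_subtype]

lemma one_dotProduct_content [Finite X] [Fintype κ] (α : X → κ) :
    1 ⬝ᵥ content α = Nat.card X := by
  have := Fintype.ofFinite X
  rw [dotProduct_comm, ← one_dotProduct_comp, Nat.card_eq_fintype_card]
  exact one_dotProduct_one

lemma content_comp_perm (α : X → κ) (g : Equiv.Perm κ) (i : κ) :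
    content (g ∘ α) i = content α (g⁻¹ i) :=
  Nat.card_congr (Equiv.subtypeEquivRight fun _ => Equiv.eq_symm_apply g |>.symm)

lemma content_comp_equiv (α : X → κ) (e : Y ≃ X) : content (α ∘ e) = content α :=
  funext fun _ => Nat.card_congr (e.subtypeEquiv fun _ => Iff.rfl)

lemma exists_embedding_comp_eq [Finite X] [Finite Y] {α : X → κ} {β : Y → κ}
    (h : content β ≤ content α) : ∃ π : Y ↪ X, α ∘ π = β := by
  have := Fintype.ofFinite X
  have := Fintype.ofFinite Y
  classical
  have hcard : ∀ i, Fintype.card {y // β y = i} ≤ Fintype.card {x // α x = i} :=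
    fun i => by simpa only [content, Nat.card_eq_fintype_card] using h i
  let f : ∀ i, {y // β y = i} ↪ {x // α x = i} := fun i =>
    (Function.Embedding.nonempty_of_card_le (hcard i)).some
  exact ⟨(Equiv.sigmaFiberEquiv β).symm.toEmbedding.trans
    ((Function.Embedding.sigmaMap (.refl κ) f).trans (Equiv.sigmaFiberEquiv α).toEmbedding),
    funext fun y => (f (β y) ⟨y, rfl⟩).2⟩

lemma content_eq_content_iff [Finite X] {α β : X → κ} :
    content α = content β ↔ ∃ τ : Equiv.Perm X, α ∘ ⇑τ⁻¹ = β := by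
  refine ⟨fun h => ?_, fun ⟨τ, hτ⟩ => hτ ▸ (content_comp_equiv α τ⁻¹).symm⟩
  obtain ⟨π, hπ⟩ := exists_embedding_comp_eq h.ge
  exact ⟨(Equiv.ofBijective π (Finite.injective_iff_bijective.1 π.injective))⁻¹, hπ⟩

lemma exists_content_eq [Fintype κ] {n : ℕ} {c : κ → ℕ} (hc : 1 ⬝ᵥ c = n) :
    ∃ α : Fin n → κ, content α = c := by
  have hcard : Fintype.card (Σ i, Fin (c i)) = n := by simp [← hc, one_dotProduct]
  let e : Fin n ≃ Σ i, Fin (c i) := (Fintype.equivFinOfCardEq hcard).symm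
  refine ⟨Sigma.fst ∘ e, ?_⟩
  rw [content_comp_equiv]
  funext i
  exact (Nat.card_congr (Equiv.sigmaSubtype i)).trans (Nat.card_fin _)

end Content

section GroupActions

attribute [local instance] arrowAction

variable {G κ : Type*} [Group G] [MulAction G κ]

lemma content_orbitRel_mk_dvd [Finite G] (q : MulAction.orbitRel.Quotient G κ) :
    content (Quotient.mk (MulAction.orbitRel G κ)) q ∣ Nat.card G := by
  induction q using Quotient.inductionOn with | _ i
  have hcard : content (Quotient.mk (MulAction.orbitRel G κ)) ⟦i⟧ =
      (MulAction.orbit G i).ncard :=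
    Nat.card_congr (Equiv.subtypeEquivRight fun _ => Quotient.eq)
  rw [hcard, ← MulAction.index_stabilizer]
  exact Subgroup.index_dvd_card _

variable [Fintype κ]

lemma ncard_fixedPoints_mem_eventualQuasiPolynomials [Finite G] {N : ℕ} (hN : N ≠ 0)
    (hGN : Nat.card G ∣ N) (D : LowerSet (κ → ℕ)) :
    (fun n => ((weightLevel 1 D n ∩ MulAction.fixedPoints G (κ → ℕ)).ncard : ℚ)) ∈
      eventualQuasiPolynomials N := by
  let p : κ → MulAction.orbitRel.Quotient G κ := Quotient.mk _
  have hp : Function.Surjective p := Quotient.mk_surjective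
  have := Fintype.ofFinite (MulAction.orbitRel.Quotient G κ)
  let D' : LowerSet (MulAction.orbitRel.Quotient G κ → ℕ) :=
    ⟨{d | d ∘ p ∈ D}, fun _ _ hle hd => D.lower (fun i => hle (p i)) hd⟩
  have himage : ∀ n, weightLevel 1 D n ∩ MulAction.fixedPoints G (κ → ℕ) =
      (· ∘ p) '' weightLevel (content p) D' n := by
    intro n
    ext c
    constructor
    · rintro ⟨⟨hc, hn⟩, hfix⟩
      have hlift : ∀ i j, MulAction.orbitRel G κ i j → c i = c j := by
        rintro _ j ⟨g, rfl⟩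
        exact (congrFun (hfix g) (g • j)).symm.trans (congrArg c (inv_smul_smul g j))
      refine ⟨Quotient.lift c hlift, ⟨hc, ?_⟩, rfl⟩
      rw [← one_dotProduct_comp]
      exact hn
    · rintro ⟨d, ⟨hd, hn⟩, rfl⟩
      refine ⟨⟨hd, (one_dotProduct_comp p d).trans hn⟩, fun g => funext fun i => ?_⟩
      exact congrArg d (Quotient.sound ⟨g⁻¹, rfl⟩)
  simp only [himage,
    Set.ncard_image_of_injective (weightLevel (content p) D' _) hp.injective_comp_right]
  exact ncard_weightLevel_mem_eventualQuasiPolynomials hN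
    (fun q => (content_orbitRel_mk_dvd q).trans hGN) D'

lemma card_orbits_eq_inv_card_mul_sum {X : Type*} [MulAction G X] [Finite X] [Fintype G] :
    (Nat.card (MulAction.orbitRel.Quotient G X) : ℚ) =
      (Nat.card G : ℚ)⁻¹ * ∑ g : G, ((MulAction.fixedBy X g).ncard : ℚ) := by
  classical
  have := Fintype.ofFinite X
  have hburnside := MulAction.sum_card_fixedBy_eq_card_orbits_mul_card_group G X
  have hG : (Nat.card G : ℚ) ≠ 0 := Nat.cast_ne_zero.2 Nat.card_pos.ne'
  rw [eq_inv_mul_iff_mul_eq₀ hG, mul_comm]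
  simp only [Set.ncard_eq_toFinset_card', Set.toFinset_card]
  rw [Nat.card_eq_fintype_card, Nat.card_eq_fintype_card]
  exact_mod_cast hburnside.symm

variable (D : LowerSet (κ → ℕ)) (hD : ∀ (g : G), ∀ c ∈ D, g • c ∈ D)

/-- The elements of size `n` in a `G`-stable lower set `D` of exponent vectors, with the action of
`G` by permutation of coordinates. -/
def stableLevel (n : ℕ) : SubMulAction G (κ → ℕ) where
  carrier := weightLevel 1 D n
  smul_mem' := by
    rintro g c ⟨hc, hn⟩
    refine ⟨hD g c hc, ?_⟩
    rw [one_dotProduct] at hn ⊢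
    exact (Equiv.sum_comp (MulAction.toPerm g⁻¹) c).trans hn

lemma ncard_fixedBy_stableLevel (n : ℕ) (g : G) :
    (MulAction.fixedBy (stableLevel D hD n) g).ncard =
      (weightLevel 1 D n ∩ MulAction.fixedPoints (Subgroup.zpowers g) (κ → ℕ)).ncard := by
  rw [← Set.ncard_image_of_injective _ Subtype.val_injective]
  congr 1
  ext c
  constructor
  · rintro ⟨⟨c, hc⟩, hfix, rfl⟩
    refine ⟨hc, ?_⟩
    rintro ⟨_, j, rfl⟩
    exact MulAction.mem_fixedBy_zpow (congrArg Subtype.val hfix) j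
  · rintro ⟨hc, hfix⟩
    exact ⟨⟨c, hc⟩, Subtype.ext (hfix ⟨g, Subgroup.mem_zpowers g⟩), rfl⟩

theorem card_orbits_stableLevel_mem_eventualQuasiPolynomials [Finite G] :
    (fun n => (Nat.card (MulAction.orbitRel.Quotient G (stableLevel D hD n)) : ℚ)) ∈
      eventualQuasiPolynomials (Nat.card G) := by
  have := Fintype.ofFinite G
  have : ∀ n, Finite (stableLevel D hD n) := fun n =>
    (finite_weightLevel (fun _ => one_pos) (D : Set (κ → ℕ)) n).to_subtype
  have hfixed : ∀ g : G, (fun n => ((MulAction.fixedBy (stableLevel D hD n) g).ncard : ℚ)) ∈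
      eventualQuasiPolynomials (Nat.card G) := by
    intro g
    simp only [ncard_fixedBy_stableLevel]
    exact ncard_fixedPoints_mem_eventualQuasiPolynomials Nat.card_pos.ne'
      (Subgroup.card_subgroup_dvd_card _) D
  have hsum := Submodule.smul_mem _ (Nat.card G : ℚ)⁻¹
    (sum_mem fun g (_ : g ∈ Finset.univ) => hfixed g)
  convert hsum using 1
  funext n
  rw [card_orbits_eq_inv_card_mul_sum, Pi.smul_apply, Finset.sum_apply, smul_eq_mul]

end GroupActions

section Words

attribute [local instance] arrowAction

lemma card_quot_eq_card_quotient {α β : Type*} {r : α → α → Prop} {s : Setoid β} {f : α → β}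
    (hf : Function.Surjective f) (hr : ∀ a b, r a b ↔ s (f a) (f b)) :
    Nat.card (Quot r) = Nat.card (Quotient s) := by
  refine Nat.card_eq_of_bijective (Quot.map f fun a b => (hr a b).1) ⟨?_, Quot.map_surjective _ hf⟩
  rintro ⟨a⟩ ⟨b⟩ h
  exact Quot.sound ((hr a b).2 (Quotient.exact h))

variable {κ : Type*} {G : Subgroup (Equiv.Perm κ)}

lemma content_comp_eq_smul {X : Type*} (α : X → κ) (g : G) :
    content (⇑g.1 ∘ α) = g • content α :=
  funext fun i => content_comp_perm α g.1 i

lemma smul_content_eq_content_iff {X : Type*} [Finite X] {α β : X → κ} {g : G} :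
    g • content α = content β ↔ ∃ τ : Equiv.Perm X, ⇑g.1 ∘ α ∘ ⇑τ⁻¹ = β := by
  rw [← content_comp_eq_smul, content_eq_content_iff]
  rfl

variable [Fintype κ] {E : ∀ n : ℕ, Set (Fin n → κ)}
  (hres : ∀ (m n : ℕ) (π : Fin m → Fin n), Function.Injective π → ∀ α ∈ E n, α ∘ π ∈ E m)

/-- The contents of the words of a family closed under restriction along injections. -/
def contents : LowerSet (κ → ℕ) where
  carrier := {c | ∃ n, ∃ α ∈ E n, content α = c}
  lower' := by
    rintro _ c hle ⟨n, α, hα, rfl⟩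
    obtain ⟨β, hβ⟩ := exists_content_eq (c := c) rfl
    obtain ⟨π, rfl⟩ := exists_embedding_comp_eq (hβ.trans_le hle)
    exact ⟨_, _, hres _ _ π π.injective α hα, hβ⟩

lemma content_mem_contents_iff {n : ℕ} {α : Fin n → κ} : content α ∈ contents hres ↔ α ∈ E n := by
  refine ⟨fun ⟨m, β, hβ, h⟩ => ?_, fun hα => ⟨n, α, hα, rfl⟩⟩
  obtain ⟨π, rfl⟩ := exists_embedding_comp_eq h.ge
  exact hres _ _ π π.injective β hβ

lemma smul_mem_contents (hG : ∀ (n : ℕ), ∀ g ∈ G, ∀ α ∈ E n, ⇑g ∘ α ∈ E n) (g : G) :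
    ∀ c ∈ contents hres, g • c ∈ contents hres := by
  rintro _ ⟨n, α, hα, rfl⟩
  exact ⟨n, _, hG n g g.2 α hα, content_comp_eq_smul α g⟩

lemma card_quot_words_eq (hG : ∀ (n : ℕ), ∀ g ∈ G, ∀ α ∈ E n, ⇑g ∘ α ∈ E n) (n : ℕ) :
    Nat.card (Quot fun α β : {α : Fin n → κ // α ∈ E n} =>
        ∃ g ∈ G, ∃ τ : Equiv.Perm (Fin n), ⇑g ∘ α.1 ∘ ⇑τ⁻¹ = β.1) =
      Nat.card (MulAction.orbitRel.Quotient G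
        (stableLevel (contents hres) (smul_mem_contents hres hG) n)) := by
  let F : {α : Fin n → κ // α ∈ E n} →
      stableLevel (contents hres) (smul_mem_contents hres hG) n :=
    fun α => ⟨content α.1, ⟨n, α.1, α.2, rfl⟩, (one_dotProduct_content α.1).trans (Nat.card_fin n)⟩
  have hF : Function.Surjective F := by
    rintro ⟨c, hc, hn⟩
    obtain ⟨α, rfl⟩ := exists_content_eq hn
    exact ⟨⟨α, (content_mem_contents_iff hres).1 hc⟩, rfl⟩
  refine card_quot_eq_card_quotient hF fun α β => ?_
  rw [Setoid.comm', MulAction.orbitRel_apply, MulAction.mem_orbit_iff, Subtype.exists]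
  refine exists_congr fun g => ?_
  rw [← exists_prop]
  exact exists_congr fun hg => (Subtype.ext_iff.trans smul_content_eq_content_iff).symm

end Words

theorem orbit_count_elementary_model_functor_general {κ : Type*} [Finite κ]
    (G : Subgroup (Equiv.Perm κ)) (E : ∀ n : ℕ, Set (Fin n → κ))
    (hG : ∀ (n : ℕ), ∀ g ∈ G, ∀ α ∈ E n, ⇑g ∘ α ∈ E n)
    (hres : ∀ (m n : ℕ) (π : Fin m → Fin n), Function.Injective π → ∀ α ∈ E n, α ∘ π ∈ E m) :
    (fun n => (Nat.card (Quot fun α β : {α : Fin n → κ // α ∈ E n} =>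
      ∃ g ∈ G, ∃ τ : Equiv.Perm (Fin n), ⇑g ∘ α.1 ∘ ⇑τ⁻¹ = β.1) : ℚ)) ∈
        eventualQuasiPolynomials (Nat.card G) := by
  have := Fintype.ofFinite κ
  simp only [card_quot_words_eq hres hG]
  exact card_orbits_stableLevel_mem_eventualQuasiPolynomials _ _

/-- Quasipolynomial count of orbits for elementary model functors:
`E n` is a set of words `[n] → [k]`, stable under postcomposition with `G ≤ Sym([k])`
and under precomposition with injections, and `G × Sym([n])` acts by
`(g,τ)·α = g ∘ α ∘ τ⁻¹`. -/
theorem orbit_count_elementary_model_functor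
    (k : ℕ) (G : Subgroup (Equiv.Perm (Fin k)))
    (E : ∀ n : ℕ, Set (Fin n → Fin k))
    (hG : ∀ (n : ℕ), ∀ g ∈ G, ∀ α ∈ E n, (⇑g ∘ α) ∈ E n)
    (hres : ∀ (m n : ℕ) (π : Fin m → Fin n), Function.Injective π →
      ∀ α ∈ E n, (α ∘ π) ∈ E m) :
    QuasiPolynomialCount (fun n =>
      Nat.card (Quot (fun (α β : {α : Fin n → Fin k // α ∈ E n}) =>
        ∃ g ∈ G, ∃ τ : Equiv.Perm (Fin n), ⇑g ∘ α.1 ∘ ⇑τ⁻¹ = β.1))) :=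
  quasiPolynomialCount_of_mem_eventualQuasiPolynomials Nat.card_pos.ne'
    (orbit_count_elementary_model_functor_general G E hG hres)
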